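/- arXiv:0908.3274 — 2 statements merged into one kernel-verified Lean document; each statement's English description precedes it below -/
import Mathlib

section
/- Let Σ ⊆ ℂ be open, let f : Σ → su(2) be a smooth conformal immersion with conformal factor e^u, and let F : Σ → SU(2) be a smooth frame satisfying F e₁ F⁻¹ = f_x/|f_x| and F e₂ F⁻¹ = f_y/|f_y|. Set N = F e₃ F⁻¹, Q = ⟨N, f_{zz}⟩ and H = (1/8) e^{-2u} ⟨f_{xx} + f_{yy}, N⟩. Then the connection coefficients are U := F⁻¹ F_z = (1/2)[[u_z, -2H e^u],[Q e^{-u}, -u_z]] and V := F⁻¹ F_{z̄} = (1/2)[[-u_{z̄}, -Q̄ e^{-u}],[2H e^u, u_{z̄}]]. -/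
open Matrix Complex

noncomputable section

attribute [local instance] Matrix.linftyOpNormedAddCommGroup Matrix.linftyOpNormedSpace
  Matrix.linftyOpNormedRing Matrix.linftyOpNormedAlgebra

/-- The space of 2×2 complex matrices. -/
abbrev M2 : Type := Matrix (Fin 2) (Fin 2) ℂ

/-- Basis vector `e₁` of su(2). -/
def e1 : M2 := !![0, -Complex.I; -Complex.I, 0]

/-- Basis vector `e₂` of su(2). -/
def e2 : M2 := !![0, 1; -1, 0]

/-- Basis vector `e₃` of su(2). -/
def e3 : M2 := !![Complex.I, 0; 0, -Complex.I]

/-- The inner product `⟨X,Y⟩ = -(1/2) tr (XY)` identifying su(2) with E³. -/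
def ip (X Y : M2) : ℂ := -(1/2 : ℂ) * (X * Y).trace

/-- Partial derivative in the `x`-direction. -/
def px (f : ℂ → M2) (z : ℂ) : M2 := fderiv ℝ f z 1

/-- Partial derivative in the `y`-direction. -/
def py (f : ℂ → M2) (z : ℂ) : M2 := fderiv ℝ f z Complex.I

/-- Wirtinger derivative `∂_z = (1/2)(∂_x - i ∂_y)`. -/
def dz (f : ℂ → M2) (z : ℂ) : M2 := (2:ℂ)⁻¹ • (px f z - Complex.I • py f z)

/-- Wirtinger derivative `∂_z̄ = (1/2)(∂_x + i ∂_y)`. -/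
def dzb (f : ℂ → M2) (z : ℂ) : M2 := (2:ℂ)⁻¹ • (px f z + Complex.I • py f z)

/-- `x`-derivative of a real-valued function on ℂ. -/
def pxR (u : ℂ → ℝ) (z : ℂ) : ℝ := fderiv ℝ u z 1

/-- `y`-derivative of a real-valued function on ℂ. -/
def pyR (u : ℂ → ℝ) (z : ℂ) : ℝ := fderiv ℝ u z Complex.I

/-- Wirtinger derivative `u_z` of a real-valued function. -/
def dzR (u : ℂ → ℝ) (z : ℂ) : ℂ := (2:ℂ)⁻¹ * ((pxR u z : ℂ) - Complex.I * (pyR u z : ℂ))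

/-- Wirtinger derivative `u_z̄` of a real-valued function. -/
def dzbR (u : ℂ → ℝ) (z : ℂ) : ℂ := (2:ℂ)⁻¹ * ((pxR u z : ℂ) + Complex.I * (pyR u z : ℂ))

/-- `x`-derivative of a complex-valued function on ℂ. -/
def pxC (q : ℂ → ℂ) (z : ℂ) : ℂ := fderiv ℝ q z 1

/-- `y`-derivative of a complex-valued function on ℂ. -/
def pyC (q : ℂ → ℂ) (z : ℂ) : ℂ := fderiv ℝ q z Complex.I

/-- Wirtinger derivative `∂_z` of a complex-valued function. -/
def dzC (q : ℂ → ℂ) (z : ℂ) : ℂ := (2:ℂ)⁻¹ * (pxC q z - Complex.I * pyC q z)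

/-- Wirtinger derivative `∂_z̄` of a complex-valued function. -/
def dzbC (q : ℂ → ℂ) (z : ℂ) : ℂ := (2:ℂ)⁻¹ * (pxC q z + Complex.I * pyC q z)

/-!
In the frame `F` the conformal immersion satisfies `f_z = e^u F (e₁ - i e₂) F⁻¹` and
`f_z̄ = e^u F (e₁ + i e₂) F⁻¹`, where `e₁ ∓ i e₂` are `-2i` times the two nilpotent elementary
matrices. Differentiating once more,
`∂_c f_d = e^u F (u_c (e₁ + d e₂) + [F⁻¹ F_c, e₁ + d e₂]) F⁻¹`.
The symmetry `f_{z z̄} = f_{z̄ z}` then gives the differences of the diagonal entries of `U` and `V`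
and the relation between `U₀₁` and `V₁₀`, and pairing `f_{zz}` and `f_{z z̄}` with `N` identifies
`U₁₀` with `Q` and `U₀₁` with `H`. Finally `det F = 1` makes `U` and `V` trace-free, and unitarity
of `F` gives `Uᴴ = -V`.
-/

open Filter Topology

section Calculus

variable {𝕜 E R : Type*} [NontriviallyNormedField 𝕜] [NormedAddCommGroup E] [NormedSpace 𝕜 E]
  [NormedRing R] [NormedAlgebra 𝕜 R] {F : E → R} {z : E}

theorem star_star_mul_fderiv_eq_neg [StarRing 𝕜] [TrivialStar 𝕜] [StarRing R] [StarModule 𝕜 R]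
    [hstar : ContinuousStar R] (hF : DifferentiableAt 𝕜 F z)
    (hunitary : ∀ᶠ w in 𝓝 z, star (F w) * F w = 1) (v : E) :
    star (star (F z) * fderiv 𝕜 F z v) = -(star (F z) * fderiv 𝕜 F z v) := by
  have hprod := hF.hasFDerivAt.star.mul' hF.hasFDerivAt
  have hconst : (fun w => star (F w)) * F =ᶠ[𝓝 z] fun _ => 1 := hunitary
  have hzero := (hconst.hasFDerivAt_iff.1 hprod).unique (hasFDerivAt_const 1 z)
  rw [star_mul, star_star, eq_neg_iff_add_eq_zero, add_comm]
  simpa using DFunLike.congr_fun hzero v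

section Inverse

variable [HasSummableGeomSeries R]

theorem fderiv_ringInverse_apply (hF : DifferentiableAt 𝕜 F z) (hunit : IsUnit (F z)) (v : E) :
    fderiv 𝕜 (fun w => Ring.inverse (F w)) z v =
      -(Ring.inverse (F z) * fderiv 𝕜 F z v * Ring.inverse (F z)) := by
  rw [fderiv_fun_comp z (differentiableAt_inverse hunit) hF]
  obtain ⟨g, hg⟩ := hunit
  simp [← hg, fderiv_inverse]

theorem fderiv_mul_const_mul_ringInverse_apply (hF : DifferentiableAt 𝕜 F z)
    (hunit : IsUnit (F z)) (e : R) (v : E) :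
    fderiv 𝕜 (fun w => F w * e * Ring.inverse (F w)) z v =
      F z * ⁅Ring.inverse (F z) * fderiv 𝕜 F z v, e⁆ * Ring.inverse (F z) := by
  rw [fderiv_fun_mul' (hF.mul_const e) (hF.inverse hunit)]
  simp only [_root_.add_apply, _root_.smul_apply, smul_eq_mul, MulOpposite.smul_eq_mul_unop,
    MulOpposite.unop_op, fderiv_ringInverse_apply hF hunit, fderiv_mul_const' hF, Ring.lie_def]
  have hcancel : F z * (Ring.inverse (F z) * fderiv 𝕜 F z v * e) = fderiv 𝕜 F z v * e := by
    rw [← mul_assoc, ← mul_assoc, Ring.mul_inverse_cancel _ hunit, one_mul]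
  rw [mul_sub, sub_mul, hcancel]
  noncomm_ring

end Inverse

end Calculus

theorem fderiv_exp_smul_mul_const_mul_ringInverse_apply {E : Type*} [NormedAddCommGroup E]
    [NormedSpace ℝ E] {R : Type*} [NormedRing R] [NormedAlgebra ℝ R] [HasSummableGeomSeries R]
    {F : E → R} {u : E → ℝ} {z : E} (hu : DifferentiableAt ℝ u z) (hF : DifferentiableAt ℝ F z)
    (hunit : IsUnit (F z)) (e : R) (v : E) :
    fderiv ℝ (fun w => Real.exp (u w) • (F w * e * Ring.inverse (F w))) z v =
      Real.exp (u z) • (F z * (fderiv ℝ u z v • e + ⁅Ring.inverse (F z) * fderiv ℝ F z v, e⁆) *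
        Ring.inverse (F z)) := by
  rw [fderiv_fun_smul hu.exp ((hF.mul_const e).fun_mul (hF.inverse hunit))]
  simp only [_root_.add_apply, _root_.smul_apply, fderiv_exp hu,
    fderiv_mul_const_mul_ringInverse_apply hF hunit, ContinuousLinearMap.smulRight_apply]
  simp only [mul_add, add_mul, mul_smul_comm, smul_mul_assoc, smul_add, smul_smul, smul_eq_mul,
    add_comm]

section Determinant

variable {𝕜 𝕂 E n : Type*} [NontriviallyNormedField 𝕜] [NontriviallyNormedField 𝕂]
  [NormedAlgebra 𝕜 𝕂] [NormedAddCommGroup E] [NormedSpace 𝕜 E] [Fintype n] [DecidableEq n]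
  {F : E → Matrix n n 𝕂} {z : E}

theorem differentiableAt_det (hF : DifferentiableAt 𝕜 F z) :
    DifferentiableAt 𝕜 (fun w => (F w).det) z := by
  have hentry (i j : n) : DifferentiableAt 𝕜 (fun w => F w i j) z :=
    differentiableAt_pi.1 (differentiableAt_pi.1 hF i) j
  simp only [Matrix.det_apply]
  fun_prop

theorem fderiv_det_one_apply (M : Matrix n n 𝕂) :
    fderiv 𝕂 (Matrix.det : Matrix n n 𝕂 → 𝕂) 1 M = M.trace := by
  have hdet : DifferentiableAt 𝕂 (Matrix.det : Matrix n n 𝕂 → 𝕂) (1 + (0 : 𝕂) • M) :=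
    differentiableAt_det differentiableAt_id
  have hline : HasDerivAt (fun t : 𝕂 => (1 : Matrix n n 𝕂) + t • M) M 0 := by
    have := ((hasDerivAt_id (0 : 𝕂)).smul_const M).const_add 1
    rwa [one_smul] at this
  have hquadratic (p : Polynomial 𝕂) :
      HasDerivAt (fun t => 1 + M.trace * t + p.eval t * t ^ 2) M.trace 0 := by
    simpa using (((hasDerivAt_id (0 : 𝕂)).const_mul M.trace).const_add 1).fun_add
      ((p.hasDerivAt 0).fun_mul ((hasDerivAt_id (0 : 𝕂)).fun_pow 2))
  have hexpand : HasDerivAt (fun t : 𝕂 => ((1 : Matrix n n 𝕂) + t • M).det) M.trace 0 := by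
    rw [funext fun t => Matrix.det_one_add_smul t M]
    exact hquadratic _
  have hchain := (hdet.hasFDerivAt.comp_hasDerivAt 0 hline).unique hexpand
  rwa [zero_smul, add_zero] at hchain

theorem fderiv_det_apply (hF : DifferentiableAt 𝕜 F z) (hdet : IsUnit (F z).det) (v : E) :
    fderiv 𝕜 (fun w => (F w).det) z v = (F z).det * ((F z)⁻¹ * fderiv 𝕜 F z v).trace := by
  have hfactor (w : E) : (F w).det = (F z).det * ((F z)⁻¹ * F w).det := by
    rw [← Matrix.det_mul, Matrix.mul_nonsing_inv_cancel_left _ _ hdet]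
  have hone : (F z)⁻¹ * F z = 1 := Matrix.nonsing_inv_mul _ hdet
  have hdetOne : HasFDerivAt (𝕜 := 𝕜) (Matrix.det : Matrix n n 𝕂 → 𝕂)
      ((fderiv 𝕂 (Matrix.det : Matrix n n 𝕂 → 𝕂) 1).restrictScalars 𝕜) ((F z)⁻¹ * F z) := by
    rw [hone]
    exact (differentiableAt_det differentiableAt_id).hasFDerivAt.restrictScalars 𝕜
  have hcomp : HasFDerivAt (fun w => (F z).det * ((F z)⁻¹ * F w).det)
      ((F z).det • ((fderiv 𝕂 (Matrix.det : Matrix n n 𝕂 → 𝕂) 1).restrictScalars 𝕜 ∘L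
        ((F z)⁻¹ • fderiv 𝕜 F z))) z :=
    (hdetOne.comp z (f := fun w => (F z)⁻¹ * F w) (hF.hasFDerivAt.const_mul (F z)⁻¹)).const_mul _
  rw [funext hfactor, hcomp.fderiv]
  simp [fderiv_det_one_apply]

end Determinant

section Wirtinger

theorem clm_eq_re_smulRight_add_im_smulRight {E : Type*} [AddCommGroup E] [Module ℝ E]
    [TopologicalSpace E] [IsTopologicalAddGroup E] [ContinuousSMul ℝ E] (L : ℂ →L[ℝ] E) :
    L = reCLM.smulRight (L 1) + imCLM.smulRight (L I) := by
  ext w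
  calc L w = L (w.re • (1 : ℂ) + w.im • I) := by simp [re_add_im]
    _ = _ := by simp only [map_add, map_smul]; rfl

theorem fderiv_fderiv_comm_of_differentiableAt {E : Type*} [NormedAddCommGroup E]
    [NormedSpace ℝ E] {f : ℂ → E} {z : ℂ} (hf : ∀ᶠ w in 𝓝 z, DifferentiableAt ℝ f w)
    (hx : DifferentiableAt ℝ (fun w => fderiv ℝ f w 1) z)
    (hy : DifferentiableAt ℝ (fun w => fderiv ℝ f w I) z) :
    fderiv ℝ (fun w => fderiv ℝ f w I) z 1 = fderiv ℝ (fun w => fderiv ℝ f w 1) z I := by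
  have hf' : DifferentiableAt ℝ (fderiv ℝ f) z := by
    rw [funext fun w => clm_eq_re_smulRight_add_im_smulRight (fderiv ℝ f w)]
    fun_prop
  have hsymm := second_derivative_symmetric_of_eventually_of_real
    (hf.mono fun w hw => hw.hasFDerivAt) hf'.hasFDerivAt 1 I
  have happly (v : ℂ) := (hf'.hasFDerivAt.clm_apply (hasFDerivAt_const v z)).fderiv
  simpa [happly] using hsymm

/-- The first-order operator `(1/2)(∂_x + c ∂_y)` on functions of `z = x + iy`. The values `c = -i`
and `c = i` give the Wirtinger derivatives `∂_z` and `∂_z̄`. -/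
def wirtinger {E : Type*} [AddCommGroup E] [Module ℝ E] [Module ℂ E] [TopologicalSpace E]
    (c : ℂ) (f : ℂ → E) (z : ℂ) : E :=
  (2 : ℂ)⁻¹ • (fderiv ℝ f z 1 + c • fderiv ℝ f z I)

theorem wirtinger_congr {E : Type*} [AddCommGroup E] [Module ℝ E] [Module ℂ E]
    [TopologicalSpace E] {f g : ℂ → E} {z : ℂ} (hfg : f =ᶠ[𝓝 z] g) (c : ℂ) :
    wirtinger c f z = wirtinger c g z := by
  simp only [wirtinger, hfg.fderiv_eq]

theorem wirtinger_ofReal {u : ℂ → ℝ} {z : ℂ} (hu : DifferentiableAt ℝ u z) (c : ℂ) :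
    wirtinger c (fun w => (u w : ℂ)) z =
      2⁻¹ * ((fderiv ℝ u z 1 : ℂ) + c * (fderiv ℝ u z I : ℂ)) := by
  have hofReal : HasFDerivAt (fun w => (u w : ℂ)) (ofRealCLM ∘L fderiv ℝ u z) z :=
    ofRealCLM.hasFDerivAt.comp z hu.hasFDerivAt
  simp [wirtinger, hofReal.fderiv]

theorem wirtinger_wirtinger {E : Type*} [NormedAddCommGroup E] [NormedSpace ℝ E]
    [NormedSpace ℂ E] [IsScalarTower ℝ ℂ E] {f : ℂ → E} {z : ℂ}
    (hf : ∀ᶠ w in 𝓝 z, DifferentiableAt ℝ f w)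
    (hx : DifferentiableAt ℝ (fun w => fderiv ℝ f w 1) z)
    (hy : DifferentiableAt ℝ (fun w => fderiv ℝ f w I) z) (c d : ℂ) :
    wirtinger c (wirtinger d f) z = (4 : ℂ)⁻¹ • (fderiv ℝ (fun w => fderiv ℝ f w 1) z 1 +
      (c + d) • fderiv ℝ (fun w => fderiv ℝ f w 1) z I +
      (c * d) • fderiv ℝ (fun w => fderiv ℝ f w I) z I) := by
  have hfderiv (v : ℂ) : fderiv ℝ (wirtinger d f) z v = (2 : ℂ)⁻¹ •
      (fderiv ℝ (fun w => fderiv ℝ f w 1) z v + d • fderiv ℝ (fun w => fderiv ℝ f w I) z v) := by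
    unfold wirtinger
    rw [fderiv_fun_const_smul (hx.fun_add (hy.fun_const_smul d)),
      fderiv_fun_add hx (hy.fun_const_smul d), fderiv_fun_const_smul hy]
    rfl
  rw [wirtinger, hfderiv, hfderiv, fderiv_fderiv_comm_of_differentiableAt hf hx hy]
  module

theorem wirtinger_exp_smul_mul_const_mul_inv {n : Type*} [Fintype n] [DecidableEq n]
    {F : ℂ → Matrix n n ℂ} {u : ℂ → ℝ} {z : ℂ} (hu : DifferentiableAt ℝ u z)
    (hF : DifferentiableAt ℝ F z) (hunit : IsUnit (F z)) (e : Matrix n n ℂ) (c : ℂ) :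
    wirtinger c (fun w => Real.exp (u w) • (F w * e * (F w)⁻¹)) z =
      Real.exp (u z) • (F z * (wirtinger c (fun w => (u w : ℂ)) z • e +
        ⁅(F z)⁻¹ * wirtinger c F z, e⁆) * (F z)⁻¹) := by
  have hfderiv (v : ℂ) : fderiv ℝ (fun w => Real.exp (u w) • (F w * e * (F w)⁻¹)) z v =
      Real.exp (u z) • (F z * (fderiv ℝ u z v • e + ⁅(F z)⁻¹ * fderiv ℝ F z v, e⁆) *
        (F z)⁻¹) := by
    simp only [Matrix.nonsing_inv_eq_ringInverse]
    exact fderiv_exp_smul_mul_const_mul_ringInverse_apply hu hF hunit e v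
  rw [wirtinger_ofReal hu]
  simp only [wirtinger, hfderiv]
  simp only [Ring.lie_def, mul_add, add_mul, mul_sub, sub_mul, mul_smul_comm, smul_mul_assoc,
    mul_assoc]
  module

end Wirtinger

section PauliAlgebra

theorem e1_add_neg_I_smul_e2 : e1 + (-I) • e2 = !![0, -2 * I; 0, 0] := by
  ext i j
  fin_cases i <;> fin_cases j <;> simp [e1, e2, two_mul]

theorem e1_add_I_smul_e2 : e1 + I • e2 = !![0, 0; -2 * I, 0] := by
  ext i j
  fin_cases i <;> fin_cases j <;> simp [e1, e2, two_mul]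

theorem smul_add_lie_e1_add_neg_I_smul_e2 (a : ℂ) (A : M2) :
    a • (e1 + (-I) • e2) + ⁅A, e1 + (-I) • e2⁆ =
      (-2 * I) • !![-A 1 0, a + A 0 0 - A 1 1; 0, A 1 0] := by
  rw [e1_add_neg_I_smul_e2, Ring.lie_def, Matrix.eta_fin_two A]
  ext i j
  fin_cases i <;> fin_cases j <;> simp <;> ring

theorem smul_add_lie_e1_add_I_smul_e2 (a : ℂ) (A : M2) :
    a • (e1 + I • e2) + ⁅A, e1 + I • e2⁆ =
      (-2 * I) • !![A 0 1, 0; a + A 1 1 - A 0 0, -A 0 1] := by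
  rw [e1_add_I_smul_e2, Ring.lie_def, Matrix.eta_fin_two A]
  ext i j
  fin_cases i <;> fin_cases j <;> simp <;> ring

theorem ip_comm (X Y : M2) : ip X Y = ip Y X := by
  rw [ip, ip, Matrix.trace_mul_comm]

theorem ip_smul_right (X Y : M2) (a : ℂ) : ip X (a • Y) = a * ip X Y := by
  simp only [ip, mul_smul_comm, Matrix.trace_smul, smul_eq_mul]
  ring

theorem ip_conj {P : M2} (hP : IsUnit P.det) (X Y : M2) :
    ip (P * X * P⁻¹) (P * Y * P⁻¹) = ip X Y := by
  have hprod : P * X * P⁻¹ * (P * Y * P⁻¹) = P * (X * Y) * P⁻¹ := by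
    simp only [mul_assoc, Matrix.nonsing_inv_mul_cancel_left _ _ hP]
  rw [ip, ip, hprod, Matrix.trace_mul_cycle, Matrix.nonsing_inv_mul _ hP, one_mul]

theorem ip_e3_left (a b c d : ℂ) : ip e3 !![a, b; c, d] = -(I / 2) * (a - d) := by
  rw [ip, e3, Matrix.mul_fin_two, Matrix.trace_fin_two_of]
  ring

end PauliAlgebra

section WirtingerNotation

theorem dz_eq_wirtinger (f : ℂ → M2) : dz f = wirtinger (-I) f := by
  funext z
  simp only [dz, px, py, wirtinger, neg_smul, sub_eq_add_neg]

theorem dzb_eq_wirtinger (f : ℂ → M2) : dzb f = wirtinger I f := rfl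

theorem wirtinger_neg_I_ofReal {u : ℂ → ℝ} {z : ℂ} (hu : DifferentiableAt ℝ u z) :
    wirtinger (-I) (fun w => (u w : ℂ)) z = dzR u z := by
  rw [wirtinger_ofReal hu, dzR, pxR, pyR, neg_mul, sub_eq_add_neg]

theorem wirtinger_I_ofReal {u : ℂ → ℝ} {z : ℂ} (hu : DifferentiableAt ℝ u z) :
    wirtinger I (fun w => (u w : ℂ)) z = dzbR u z :=
  wirtinger_ofReal hu I

end WirtingerNotation

section Frame

theorem ofReal_exp_mul_ofReal_exp_neg (x : ℝ) : (Real.exp x : ℂ) * Real.exp (-x) = 1 := by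
  rw [← ofReal_mul, ← Real.exp_add, add_neg_cancel, Real.exp_zero, ofReal_one]

/-- The coefficient matrix `F⁻¹ (1/2)(F_x + c F_y)` of the Maurer–Cartan form of `F`: it is
`U = F⁻¹ F_z` for `c = -i` and `V = F⁻¹ F_z̄` for `c = i`. -/
def connection (c : ℂ) (F : ℂ → M2) (z : ℂ) : M2 := (F z)⁻¹ * wirtinger c F z

/-- The unit normal `N = F e₃ F⁻¹` of the surface framed by `F`. -/
def unitNormal (F : ℂ → M2) (z : ℂ) : M2 := F z * e3 * (F z)⁻¹

/-- The coefficient `Q = ⟨N, f_zz⟩` of the Hopf differential of `f`, where `N` is the unit normal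
of the frame `F`. -/
def hopfCoefficient (f F : ℂ → M2) (z : ℂ) : ℂ := ip (unitNormal F z) (dz (dz f) z)

/-- The mean curvature `H = (1/8) e^{-2u} ⟨f_xx + f_yy, N⟩` of an immersion `f` whose induced metric
is `4 e^{2u} |dz|²`; it is complex-valued because `ip` is. -/
def meanCurvature (f : ℂ → M2) (u : ℂ → ℝ) (F : ℂ → M2) (z : ℂ) : ℂ :=
  (((8 * Real.exp (2 * u z))⁻¹ : ℝ) : ℂ) * ip (px (px f) z + py (py f) z) (unitNormal F z)

/-- `F` is an `SU(2)`-frame on the open set `S` adapted to a conformal map `f` with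
`|f_x| = |f_y| = 2 e^u`: it rotates `e₁` and `e₂` to the normalized partial derivatives of `f`. -/
structure IsConformalFrameOn (S : Set ℂ) (f : ℂ → M2) (u : ℂ → ℝ) (F : ℂ → M2) : Prop where
  isOpen : IsOpen S
  differentiableOn_map : DifferentiableOn ℝ f S
  differentiableOn_factor : DifferentiableOn ℝ u S
  differentiableOn_frame : DifferentiableOn ℝ F S
  unitary : ∀ z ∈ S, (F z)ᴴ * F z = 1 ∧ (F z).det = 1
  frame_e1 : ∀ z ∈ S, F z * e1 * (F z)⁻¹ = (((2 * Real.exp (u z))⁻¹ : ℝ) : ℂ) • px f z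
  frame_e2 : ∀ z ∈ S, F z * e2 * (F z)⁻¹ = (((2 * Real.exp (u z))⁻¹ : ℝ) : ℂ) • py f z

namespace IsConformalFrameOn

variable {S : Set ℂ} {f F : ℂ → M2} {u : ℂ → ℝ} {z : ℂ}

theorem eventually_mem (h : IsConformalFrameOn S f u F) (hz : z ∈ S) : ∀ᶠ w in 𝓝 z, w ∈ S :=
  h.isOpen.mem_nhds hz

theorem differentiableAt_factor (h : IsConformalFrameOn S f u F) (hz : z ∈ S) :
    DifferentiableAt ℝ u z :=
  h.differentiableOn_factor.differentiableAt (h.isOpen.mem_nhds hz)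

theorem differentiableAt_frame (h : IsConformalFrameOn S f u F) (hz : z ∈ S) :
    DifferentiableAt ℝ F z :=
  h.differentiableOn_frame.differentiableAt (h.isOpen.mem_nhds hz)

theorem isUnit_det (h : IsConformalFrameOn S f u F) (hz : z ∈ S) : IsUnit (F z).det := by
  simp [(h.unitary z hz).2]

theorem isUnit_frame (h : IsConformalFrameOn S f u F) (hz : z ∈ S) : IsUnit (F z) :=
  (Matrix.isUnit_iff_isUnit_det _).2 (h.isUnit_det hz)

theorem inv_eq_conjTranspose (h : IsConformalFrameOn S f u F) (hz : z ∈ S) : (F z)⁻¹ = (F z)ᴴ :=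
  Matrix.inv_eq_left_inv (h.unitary z hz).1

theorem trace_connection (h : IsConformalFrameOn S f u F) (hz : z ∈ S) (c : ℂ) :
    (connection c F z).trace = 0 := by
  have htrace (v : ℂ) : ((F z)⁻¹ * fderiv ℝ F z v).trace = 0 := by
    have hconst : (fun w => (F w).det) =ᶠ[𝓝 z] fun _ => 1 :=
      (h.eventually_mem hz).mono fun w hw => (h.unitary w hw).2
    have hjacobi := fderiv_det_apply (h.differentiableAt_frame hz) (h.isUnit_det hz) v
    rw [hconst.fderiv_eq, (h.unitary z hz).2, one_mul] at hjacobi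
    simpa using hjacobi.symm
  simp [connection, wirtinger, mul_add, htrace]

theorem conjTranspose_connection (h : IsConformalFrameOn S f u F) (hz : z ∈ S) (c : ℂ) :
    (connection c F z)ᴴ = -connection (starRingEnd ℂ c) F z := by
  have hskew (v : ℂ) : ((F z)⁻¹ * fderiv ℝ F z v)ᴴ = -((F z)⁻¹ * fderiv ℝ F z v) := by
    rw [h.inv_eq_conjTranspose hz]
    -- Mathlib's `ContinuousStar` instance is for the product topology on matrices, which agrees
    -- with the topology of the operator norm only after unfolding.
    exact star_star_mul_fderiv_eq_neg (hstar := ⟨continuous_id.matrix_conjTranspose⟩)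
      (h.differentiableAt_frame hz)
      ((h.eventually_mem hz).mono fun w hw => (h.unitary w hw).1) v
  simp only [connection, wirtinger, mul_smul_comm, mul_add, Matrix.conjTranspose_smul,
    Matrix.conjTranspose_add, hskew]
  simp [smul_neg, add_comm]

theorem px_eq (h : IsConformalFrameOn S f u F) (hz : z ∈ S) :
    px f z = (2 : ℝ) • Real.exp (u z) • (F z * e1 * (F z)⁻¹) := by
  rw [h.frame_e1 z hz, Complex.coe_smul, smul_smul, smul_smul, mul_inv_cancel₀ (by positivity),
    one_smul]

theorem py_eq (h : IsConformalFrameOn S f u F) (hz : z ∈ S) :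
    py f z = (2 : ℝ) • Real.exp (u z) • (F z * e2 * (F z)⁻¹) := by
  rw [h.frame_e2 z hz, Complex.coe_smul, smul_smul, smul_smul, mul_inv_cancel₀ (by positivity),
    one_smul]

theorem differentiableAt_exp_smul_conj (h : IsConformalFrameOn S f u F) (hz : z ∈ S) (e : M2) :
    DifferentiableAt ℝ (fun w => (2 : ℝ) • Real.exp (u w) • (F w * e * (F w)⁻¹)) z := by
  have hF := h.differentiableAt_frame hz
  simp only [Matrix.nonsing_inv_eq_ringInverse]
  exact ((h.differentiableAt_factor hz).exp.fun_smul
    ((hF.mul_const e).fun_mul (hF.inverse (h.isUnit_frame hz)))).fun_const_smul 2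

theorem differentiableAt_px (h : IsConformalFrameOn S f u F) (hz : z ∈ S) :
    DifferentiableAt ℝ (px f) z :=
  (h.differentiableAt_exp_smul_conj hz e1).congr_of_eventuallyEq
    ((h.eventually_mem hz).mono fun _ hw => h.px_eq hw)

theorem differentiableAt_py (h : IsConformalFrameOn S f u F) (hz : z ∈ S) :
    DifferentiableAt ℝ (py f) z :=
  (h.differentiableAt_exp_smul_conj hz e2).congr_of_eventuallyEq
    ((h.eventually_mem hz).mono fun _ hw => h.py_eq hw)

theorem wirtinger_wirtinger_eq (h : IsConformalFrameOn S f u F) (hz : z ∈ S) (c d : ℂ) :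
    wirtinger c (wirtinger d f) z =
      (4 : ℂ)⁻¹ • (px (px f) z + (c + d) • py (px f) z + (c * d) • py (py f) z) :=
  wirtinger_wirtinger
    ((h.eventually_mem hz).mono fun _ hw =>
      h.differentiableOn_map.differentiableAt (h.isOpen.mem_nhds hw))
    (h.differentiableAt_px hz) (h.differentiableAt_py hz) c d

theorem wirtinger_map (h : IsConformalFrameOn S f u F) (hz : z ∈ S) (d : ℂ) :
    wirtinger d f z = Real.exp (u z) • (F z * (e1 + d • e2) * (F z)⁻¹) := by
  change (2 : ℂ)⁻¹ • (px f z + d • py f z) = _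
  rw [h.px_eq hz, h.py_eq hz, mul_add, add_mul, mul_smul_comm, smul_mul_assoc]
  module

theorem wirtinger_wirtinger_map (h : IsConformalFrameOn S f u F) (hz : z ∈ S) (c d : ℂ) :
    wirtinger c (wirtinger d f) z =
      Real.exp (u z) • (F z * (wirtinger c (fun w => (u w : ℂ)) z • (e1 + d • e2) +
        ⁅connection c F z, e1 + d • e2⁆) * (F z)⁻¹) := by
  rw [wirtinger_congr ((h.eventually_mem hz).mono fun w hw => h.wirtinger_map hw d)]
  exact wirtinger_exp_smul_mul_const_mul_inv (h.differentiableAt_factor hz)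
    (h.differentiableAt_frame hz) (h.isUnit_frame hz) _ c

theorem dz_dz_map (h : IsConformalFrameOn S f u F) (hz : z ∈ S) :
    dz (dz f) z = ((Real.exp (u z) : ℂ) * (-2 * I)) • (F z *
      !![-connection (-I) F z 1 0, dzR u z + connection (-I) F z 0 0 - connection (-I) F z 1 1;
        0, connection (-I) F z 1 0] * (F z)⁻¹) := by
  rw [dz_eq_wirtinger, dz_eq_wirtinger, h.wirtinger_wirtinger_map hz,
    wirtinger_neg_I_ofReal (h.differentiableAt_factor hz), smul_add_lie_e1_add_neg_I_smul_e2,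
    mul_smul_comm, smul_mul_assoc, ← Complex.coe_smul, smul_smul]

theorem smul_add_lie_connection_comm (h : IsConformalFrameOn S f u F) (hz : z ∈ S) (c d : ℂ) :
    wirtinger c (fun w => (u w : ℂ)) z • (e1 + d • e2) + ⁅connection c F z, e1 + d • e2⁆ =
      wirtinger d (fun w => (u w : ℂ)) z • (e1 + c • e2) + ⁅connection d F z, e1 + c • e2⁆ := by
  have hsymm : wirtinger c (wirtinger d f) z = wirtinger d (wirtinger c f) z := by
    rw [h.wirtinger_wirtinger_eq hz, h.wirtinger_wirtinger_eq hz, add_comm c, mul_comm c]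
  rwa [h.wirtinger_wirtinger_map hz, h.wirtinger_wirtinger_map hz,
    smul_right_inj (Real.exp_ne_zero _),
    (Matrix.isUnit_nonsing_inv_iff.2 (h.isUnit_frame hz)).mul_left_inj,
    (h.isUnit_frame hz).mul_right_inj] at hsymm

theorem connection_compatibility (h : IsConformalFrameOn S f u F) (hz : z ∈ S) :
    !![-connection I F z 1 0, dzbR u z + connection I F z 0 0 - connection I F z 1 1;
        0, connection I F z 1 0] =
      !![connection (-I) F z 0 1, 0;
        dzR u z + connection (-I) F z 1 1 - connection (-I) F z 0 0, -connection (-I) F z 0 1] := by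
  have hu := h.differentiableAt_factor hz
  have hcomm := h.smul_add_lie_connection_comm hz I (-I)
  rwa [smul_add_lie_e1_add_neg_I_smul_e2, smul_add_lie_e1_add_I_smul_e2, smul_right_inj (by simp),
    wirtinger_I_ofReal hu, wirtinger_neg_I_ofReal hu] at hcomm

theorem connection_I_one_zero (h : IsConformalFrameOn S f u F) (hz : z ∈ S) :
    connection I F z 1 0 = -connection (-I) F z 0 1 := by
  simpa using congr_fun₂ (h.connection_compatibility hz) 1 1

theorem connection_I_zero_one (h : IsConformalFrameOn S f u F) (hz : z ∈ S) :
    connection I F z 0 1 = -starRingEnd ℂ (connection (-I) F z 1 0) := by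
  have hentry := congr_fun₂ (h.conjTranspose_connection hz (-I)) 0 1
  exact neg_eq_iff_eq_neg.1 (by simpa using hentry.symm)

theorem connection_neg_I_diagonal (h : IsConformalFrameOn S f u F) (hz : z ∈ S) :
    connection (-I) F z 0 0 = 2⁻¹ * dzR u z ∧ connection (-I) F z 1 1 = -(2⁻¹ * dzR u z) := by
  have htrace := h.trace_connection hz (-I)
  rw [Matrix.trace_fin_two] at htrace
  have hdiff : 0 = dzR u z + connection (-I) F z 1 1 - connection (-I) F z 0 0 := by
    simpa using congr_fun₂ (h.connection_compatibility hz) 1 0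
  constructor <;> grind

theorem connection_I_diagonal (h : IsConformalFrameOn S f u F) (hz : z ∈ S) :
    connection I F z 0 0 = -(2⁻¹ * dzbR u z) ∧ connection I F z 1 1 = 2⁻¹ * dzbR u z := by
  have htrace := h.trace_connection hz I
  rw [Matrix.trace_fin_two] at htrace
  have hdiff : dzbR u z + connection I F z 0 0 - connection I F z 1 1 = 0 := by
    simpa using congr_fun₂ (h.connection_compatibility hz) 0 1
  constructor <;> grind

theorem hopfCoefficient_eq (h : IsConformalFrameOn S f u F) (hz : z ∈ S) :
    hopfCoefficient f F z = 2 * Real.exp (u z) * connection (-I) F z 1 0 := by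
  rw [hopfCoefficient, unitNormal, h.dz_dz_map hz, ip_smul_right, ip_conj (h.isUnit_det hz),
    ip_e3_left]
  linear_combination (-2 * Real.exp (u z) * connection (-I) F z 1 0) * I_sq

theorem px_px_add_py_py (h : IsConformalFrameOn S f u F) (hz : z ∈ S) :
    px (px f) z + py (py f) z = (4 : ℂ) • wirtinger (-I) (wirtinger I f) z := by
  rw [h.wirtinger_wirtinger_eq hz]
  simp [smul_smul]

theorem ip_laplacian_unitNormal (h : IsConformalFrameOn S f u F) (hz : z ∈ S) :
    ip (px (px f) z + py (py f) z) (unitNormal F z) =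
      -8 * Real.exp (u z) * connection (-I) F z 0 1 := by
  rw [ip_comm, unitNormal, h.px_px_add_py_py hz, h.wirtinger_wirtinger_map hz,
    smul_add_lie_e1_add_I_smul_e2, mul_smul_comm, smul_mul_assoc, ← Complex.coe_smul,
    ip_smul_right, ip_smul_right, ip_smul_right, ip_conj (h.isUnit_det hz), ip_e3_left]
  linear_combination (8 * Real.exp (u z) * connection (-I) F z 0 1) * I_sq

theorem meanCurvature_eq (h : IsConformalFrameOn S f u F) (hz : z ∈ S) :
    meanCurvature f u F z = -(Real.exp (-u z) * connection (-I) F z 0 1) := by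
  have hexp : (8 * Real.exp (2 * u z))⁻¹ * (8 * Real.exp (u z)) = Real.exp (-u z) := by
    rw [two_mul, Real.exp_add, Real.exp_neg]
    field_simp
  rw [meanCurvature, h.ip_laplacian_unitNormal hz, ← hexp]
  push_cast
  ring

theorem connection_neg_I_one_zero (h : IsConformalFrameOn S f u F) (hz : z ∈ S) :
    connection (-I) F z 1 0 = 2⁻¹ * (hopfCoefficient f F z * Real.exp (-u z)) := by
  rw [h.hopfCoefficient_eq hz]
  linear_combination -connection (-I) F z 1 0 * ofReal_exp_mul_ofReal_exp_neg (u z)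

theorem connection_neg_I_zero_one (h : IsConformalFrameOn S f u F) (hz : z ∈ S) :
    connection (-I) F z 0 1 = -(meanCurvature f u F z * Real.exp (u z)) := by
  rw [h.meanCurvature_eq hz]
  linear_combination -connection (-I) F z 0 1 * ofReal_exp_mul_ofReal_exp_neg (u z)

theorem connection_neg_I_eq (h : IsConformalFrameOn S f u F) (hz : z ∈ S) :
    connection (-I) F z = (2 : ℂ)⁻¹ •
      !![dzR u z, -2 * meanCurvature f u F z * (Real.exp (u z) : ℂ);
         hopfCoefficient f F z * (Real.exp (-u z) : ℂ), -dzR u z] := by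
  obtain ⟨hzero, hone⟩ := h.connection_neg_I_diagonal hz
  rw [Matrix.eta_fin_two (connection (-I) F z), hzero, hone, h.connection_neg_I_zero_one hz,
    h.connection_neg_I_one_zero hz]
  simp [mul_assoc]

theorem connection_I_eq (h : IsConformalFrameOn S f u F) (hz : z ∈ S) :
    connection I F z = (2 : ℂ)⁻¹ •
      !![-dzbR u z, -(starRingEnd ℂ (hopfCoefficient f F z)) * (Real.exp (-u z) : ℂ);
         2 * meanCurvature f u F z * (Real.exp (u z) : ℂ), dzbR u z] := by
  obtain ⟨hzero, hone⟩ := h.connection_I_diagonal hz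
  rw [Matrix.eta_fin_two (connection I F z), hzero, hone, h.connection_I_zero_one hz,
    h.connection_I_one_zero hz, h.connection_neg_I_zero_one hz, h.connection_neg_I_one_zero hz]
  simp [mul_assoc, map_ofNat, ← Complex.exp_conj]

end IsConformalFrameOn

end Frame

theorem connection_coefficients_general {S : Set ℂ} {f F : ℂ → M2} {u : ℂ → ℝ} {z : ℂ}
    (h : IsConformalFrameOn S f u F) (hz : z ∈ S) :
    (F z)⁻¹ * dz F z = (2 : ℂ)⁻¹ •
        !![dzR u z, -2 * meanCurvature f u F z * (Real.exp (u z) : ℂ);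
           hopfCoefficient f F z * (Real.exp (-u z) : ℂ), -dzR u z] ∧
      (F z)⁻¹ * dzb F z = (2 : ℂ)⁻¹ •
        !![-dzbR u z, -(starRingEnd ℂ (hopfCoefficient f F z)) * (Real.exp (-u z) : ℂ);
           2 * meanCurvature f u F z * (Real.exp (u z) : ℂ), dzbR u z] := by
  rw [dz_eq_wirtinger, dzb_eq_wirtinger]
  exact ⟨h.connection_neg_I_eq hz, h.connection_I_eq hz⟩

/-- the connection coefficients `U = F⁻¹F_z` and `V = F⁻¹F_z̄` of the
`SU(2)`-frame of a conformal immersion `f : Σ → su(2)` are given by the standard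
matrices in terms of `u`, `Q` and `H`. -/
theorem connection_coefficients
    (S : Set ℂ) (hS : IsOpen S)
    (f : ℂ → M2) (u : ℂ → ℝ) (F : ℂ → M2)
    (hf : ContDiffOn ℝ (⊤ : ℕ∞) f S)
    (hu : ContDiffOn ℝ (⊤ : ℕ∞) u S)
    (hF : ContDiffOn ℝ (⊤ : ℕ∞) F S)
    (hsu2 : ∀ z ∈ S, (f z)ᴴ = -(f z) ∧ (f z).trace = 0)
    (hconf : ∀ z ∈ S,
      ip (px f z) (px f z) = ((4 * Real.exp (2 * u z) : ℝ) : ℂ) ∧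
      ip (py f z) (py f z) = ((4 * Real.exp (2 * u z) : ℝ) : ℂ) ∧
      ip (px f z) (py f z) = 0)
    (hFunit : ∀ z ∈ S, (F z)ᴴ * F z = 1 ∧ (F z).det = 1)
    (hFe1 : ∀ z ∈ S, F z * e1 * (F z)⁻¹ = (((2 * Real.exp (u z))⁻¹ : ℝ) : ℂ) • px f z)
    (hFe2 : ∀ z ∈ S, F z * e2 * (F z)⁻¹ = (((2 * Real.exp (u z))⁻¹ : ℝ) : ℂ) • py f z)
    (N : ℂ → M2) (hN : ∀ z, N z = F z * e3 * (F z)⁻¹)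
    (Q : ℂ → ℂ) (hQ : ∀ z, Q z = ip (N z) (dz (dz f) z))
    (H : ℂ → ℂ)
    (hH : ∀ z, H z = (((8 * Real.exp (2 * u z))⁻¹ : ℝ) : ℂ) *
      ip (px (px f) z + py (py f) z) (N z)) :
    ∀ z ∈ S,
      (F z)⁻¹ * dz F z = (2:ℂ)⁻¹ •
        !![dzR u z, -2 * H z * (Real.exp (u z) : ℂ);
           Q z * (Real.exp (-(u z)) : ℂ), -(dzR u z)] ∧
      (F z)⁻¹ * dzb F z = (2:ℂ)⁻¹ •
        !![-(dzbR u z), -((starRingEnd ℂ) (Q z)) * (Real.exp (-(u z)) : ℂ);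
           2 * H z * (Real.exp (u z) : ℂ), dzbR u z] := by
  intro z hz
  have hframe : IsConformalFrameOn S f u F :=
    ⟨hS, hf.differentiableOn (by simp), hu.differentiableOn (by simp),
      hF.differentiableOn (by simp), hFunit, hFe1, hFe2⟩
  simp only [hH, hQ, hN]
  exact connection_coefficients_general hframe hz
end
end

section
/- Let Σ ⊆ ℂ be open and let u : Σ → ℝ, Q : Σ → ℂ, H : Σ → ℝ be smooth. Define the matrix-valued functions U = (1/2)[[u_z, -2H e^u],[Q e^{-u}, -u_z]] and V = (1/2)[[-u_{z̄}, -Q̄ e^{-u}],[2H e^u, u_{z̄}]]. Then the zero-curvature (Maurer–Cartan) equation ∂_z V - ∂_{z̄} U + [U,V] = 0 holds on Σ if and only if both u_{z z̄} + H² e^{2u} - (1/4)|Q|² e^{-2u} = 0 and ∂_{z̄} Q = 2 e^{2u} ∂_z H hold on Σ. -/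
open Matrix Complex

noncomputable section

attribute [local instance] Matrix.linftyOpNormedAddCommGroup Matrix.linftyOpNormedSpace
  Matrix.linftyOpNormedRing Matrix.linftyOpNormedAlgebra

/-!
Replace `Q̄` by an independent function `R` and let `u`, `H` be complex valued. By the Leibniz rule
and `∂_z ∂_z̄ u = ∂_z̄ ∂_z u`, the derivatives of `e^{±u}` cancel against the off-diagonal part of
`[U, V]`, and the curvature is `[[-G, -e^{-u} C' / 2], [-e^{-u} C / 2, G]]`, where `G` is the Gauss
expression, `C = Q_z̄ - 2 e^{2u} H_z` and `C' = R_z - 2 e^{2u} H_z̄`. When `u` and `H` are real and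
`R = Q̄`, the entry `C'` is the complex conjugate of `C`, so the two vanish together.
-/

open scoped ComplexConjugate

section WirtingerDeriv

variable {E F A : Type*} [NormedAddCommGroup E] [NormedSpace ℂ E] [NormedAddCommGroup F]
  [NormedSpace ℂ F] [NormedRing A] [NormedAlgebra ℂ A]

/-- The first-order operator `(1/2)(∂_x + ε ∂_y)`. The Wirtinger derivatives `∂_z` and `∂_z̄` are
the cases `ε = -i` and `ε = i`; the parameter lets both be treated at once. -/
def wirtingerDeriv (ε : ℂ) (f : ℂ → E) (z : ℂ) : E :=
  (2 : ℂ)⁻¹ • (fderiv ℝ f z 1 + ε • fderiv ℝ f z I)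

theorem dz_eq_wirtingerDeriv (f : ℂ → M2) : dz f = wirtingerDeriv (-I) f := by
  funext z
  rw [dz, wirtingerDeriv, neg_smul, ← sub_eq_add_neg]
  rfl

theorem dzb_eq_wirtingerDeriv (f : ℂ → M2) : dzb f = wirtingerDeriv I f := rfl

theorem dzC_eq_wirtingerDeriv (f : ℂ → ℂ) : dzC f = wirtingerDeriv (-I) f := by
  funext z
  rw [dzC, wirtingerDeriv, neg_smul, ← sub_eq_add_neg]
  rfl

theorem dzbC_eq_wirtingerDeriv (f : ℂ → ℂ) : dzbC f = wirtingerDeriv I f := rfl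

theorem wirtingerDeriv_clm_comp (ε : ℂ) (L : E →L[ℂ] F) {f : ℂ → E} {z : ℂ}
    (hf : DifferentiableAt ℝ f z) :
    wirtingerDeriv ε (fun w => L (f w)) z = L (wirtingerDeriv ε f z) := by
  have hL : fderiv ℝ (fun w => L (f w)) z = (L.restrictScalars ℝ).comp (fderiv ℝ f z) :=
    ((L.restrictScalars ℝ).hasFDerivAt.comp z hf.hasFDerivAt).fderiv
  simp [wirtingerDeriv, hL]

theorem wirtingerDeriv_neg (ε : ℂ) (f : ℂ → E) (z : ℂ) :
    wirtingerDeriv ε (fun w => -f w) z = -wirtingerDeriv ε f z := by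
  simp only [wirtingerDeriv, fderiv_fun_neg, _root_.neg_apply, smul_neg, ← neg_add]

theorem wirtingerDeriv_const_smul (ε c : ℂ) {f : ℂ → E} {z : ℂ} (hf : DifferentiableAt ℝ f z) :
    wirtingerDeriv ε (fun w => c • f w) z = c • wirtingerDeriv ε f z :=
  wirtingerDeriv_clm_comp ε (c • ContinuousLinearMap.id ℂ E) hf

theorem wirtingerDeriv_mul (ε : ℂ) {f g : ℂ → A} {z : ℂ} (hf : DifferentiableAt ℝ f z)
    (hg : DifferentiableAt ℝ g z) :
    wirtingerDeriv ε (fun w => f w * g w) z =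
      wirtingerDeriv ε f z * g z + f z * wirtingerDeriv ε g z := by
  simp only [wirtingerDeriv, fderiv_fun_mul' hf hg, _root_.add_apply,
    _root_.smul_apply, smul_eq_mul, MulOpposite.smul_eq_mul_unop,
    MulOpposite.unop_op, smul_add, smul_mul_assoc, mul_smul_comm, add_mul, mul_add]
  abel

theorem wirtingerDeriv_holomorphic_comp (ε : ℂ) {h : ℂ → E} {f : ℂ → ℂ} {z : ℂ}
    (hh : DifferentiableAt ℂ h (f z)) (hf : DifferentiableAt ℝ f z) :
    wirtingerDeriv ε (fun w => h (f w)) z = wirtingerDeriv ε f z • deriv h (f z) := by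
  have hcomp : fderiv ℝ (fun w => h (f w)) z =
      ((fderiv ℂ h (f z)).restrictScalars ℝ).comp (fderiv ℝ f z) :=
    ((hh.hasFDerivAt.restrictScalars ℝ).comp z hf.hasFDerivAt).fderiv
  simp [wirtingerDeriv, hcomp, fderiv_eq_smul_deriv, smul_smul, ← add_smul, mul_add]

theorem wirtingerDeriv_mul_cexp (ε : ℂ) {f g : ℂ → ℂ} {z : ℂ} (hf : DifferentiableAt ℝ f z)
    (hg : DifferentiableAt ℝ g z) :
    wirtingerDeriv ε (fun w => g w * exp (f w)) z =
      (wirtingerDeriv ε g z + g z * wirtingerDeriv ε f z) * exp (f z) := by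
  rw [wirtingerDeriv_mul ε hg hf.cexp,
    wirtingerDeriv_holomorphic_comp ε differentiableAt_exp hf, Complex.deriv_exp, smul_eq_mul]
  ring

theorem conj_wirtingerDeriv (ε : ℂ) (f : ℂ → ℂ) (z : ℂ) :
    conj (wirtingerDeriv ε f z) = wirtingerDeriv (conj ε) (fun w => conj (f w)) z := by
  have hconj : fderiv ℝ (fun w => conj (f w)) z =
      (conjCLE : ℂ →L[ℝ] ℂ).comp (fderiv ℝ f z) := conjCLE.comp_fderiv
  simp [wirtingerDeriv, hconj, map_ofNat]

theorem differentiableAt_wirtingerDeriv (ε : ℂ) {f : ℂ → E} {z : ℂ} (hf : ContDiffAt ℝ 2 f z) :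
    DifferentiableAt ℝ (wirtingerDeriv ε f) z := by
  have hf' : DifferentiableAt ℝ (fderiv ℝ f) z :=
    (hf.fderiv_right (m := 1) le_rfl).differentiableAt one_ne_zero
  unfold wirtingerDeriv
  fun_prop

theorem fderiv_wirtingerDeriv_apply (ε : ℂ) {f : ℂ → E} {z : ℂ} (hf : ContDiffAt ℝ 2 f z)
    (v : ℂ) :
    fderiv ℝ (wirtingerDeriv ε f) z v =
      (2 : ℂ)⁻¹ • (fderiv ℝ (fderiv ℝ f) z v 1 + ε • fderiv ℝ (fderiv ℝ f) z v I) := by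
  have hf' : HasFDerivAt (fderiv ℝ f) (fderiv ℝ (fderiv ℝ f) z) z :=
    ((hf.fderiv_right (m := 1) le_rfl).differentiableAt one_ne_zero).hasFDerivAt
  have hpartial (w : ℂ) := hf'.clm_apply (hasFDerivAt_const w z)
  have hsum := ((hpartial 1).add ((hpartial I).const_smul ε)).const_smul (2 : ℂ)⁻¹
  have hv : fderiv ℝ (wirtingerDeriv ε f) z v = _ := DFunLike.congr_fun hsum.fderiv v
  simpa using hv

theorem wirtingerDeriv_comm (ε δ : ℂ) {f : ℂ → E} {z : ℂ} (hf : ContDiffAt ℝ 2 f z) :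
    wirtingerDeriv ε (wirtingerDeriv δ f) z = wirtingerDeriv δ (wirtingerDeriv ε f) z := by
  have hsymm : fderiv ℝ (fderiv ℝ f) z 1 I = fderiv ℝ (fderiv ℝ f) z I 1 :=
    (hf.isSymmSndFDerivAt (by simp)).eq 1 I
  rw [wirtingerDeriv, wirtingerDeriv]
  simp only [fderiv_wirtingerDeriv_apply _ hf, hsymm]
  module

end WirtingerDeriv

section MatrixValued

variable {m n : Type*}

theorem differentiableAt_matrix [Finite m] [Finite n] {f : ℂ → Matrix m n ℂ} {z : ℂ} :
    DifferentiableAt ℝ f z ↔ ∀ i j, DifferentiableAt ℝ (fun w => f w i j) z := by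
  have := Fintype.ofFinite m
  have := Fintype.ofFinite n
  exact differentiableAt_pi.trans (forall_congr' fun _ => differentiableAt_pi)

theorem wirtingerDeriv_matrix_apply [Fintype m] [Fintype n] (ε : ℂ) {f : ℂ → Matrix m n ℂ} {z : ℂ}
    (hf : DifferentiableAt ℝ f z) (i : m) (j : n) :
    wirtingerDeriv ε f z i j = wirtingerDeriv ε (fun w => f w i j) z :=
  (wirtingerDeriv_clm_comp ε (Matrix.entryLinearMap ℂ ℂ i j).toContinuousLinearMap hf).symm

theorem differentiableAt_fin_two {a b c d : ℂ → ℂ} {z : ℂ} (ha : DifferentiableAt ℝ a z)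
    (hb : DifferentiableAt ℝ b z) (hc : DifferentiableAt ℝ c z) (hd : DifferentiableAt ℝ d z) :
    DifferentiableAt ℝ (fun w => !![a w, b w; c w, d w]) z := by
  simp [differentiableAt_matrix, Fin.forall_fin_two, ha, hb, hc, hd]

theorem wirtingerDeriv_fin_two (ε : ℂ) {a b c d : ℂ → ℂ} {z : ℂ} (ha : DifferentiableAt ℝ a z)
    (hb : DifferentiableAt ℝ b z) (hc : DifferentiableAt ℝ c z) (hd : DifferentiableAt ℝ d z) :
    wirtingerDeriv ε (fun w => !![a w, b w; c w, d w]) z =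
      !![wirtingerDeriv ε a z, wirtingerDeriv ε b z;
        wirtingerDeriv ε c z, wirtingerDeriv ε d z] := by
  ext i j
  rw [wirtingerDeriv_matrix_apply ε (differentiableAt_fin_two ha hb hc hd)]
  fin_cases i <;> fin_cases j <;> rfl

end MatrixValued

section LaxPair

/-- The matrix `U` of the theorem, with complex-valued `u` and `H`. -/
def laxU (u H Q : ℂ → ℂ) (z : ℂ) : M2 :=
  (2 : ℂ)⁻¹ • !![dzC u z, -2 * H z * exp (u z); Q z * exp (-u z), -dzC u z]

/-- The matrix `V` of the theorem, with complex-valued `u` and `H` and with an independent function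
`R` in place of `Q̄`. -/
def laxV (u H R : ℂ → ℂ) (z : ℂ) : M2 :=
  (2 : ℂ)⁻¹ • !![-dzbC u z, -R z * exp (-u z); 2 * H z * exp (u z), dzbC u z]

/-- The curvature of the connection with components `U` and `V`, i.e. the left-hand side of the
Maurer–Cartan equation. -/
def curvature (U V : ℂ → M2) (z : ℂ) : M2 :=
  dz V z - dzb U z + (U z * V z - V z * U z)

/-- The left-hand side of the Gauss equation, with `Q R` in place of `|Q|²`. -/
def gaussDefect (u H Q R : ℂ → ℂ) (z : ℂ) : ℂ :=
  dzbC (dzC u) z + H z ^ 2 * exp (2 * u z) - (4 : ℂ)⁻¹ * (Q z * R z) * exp (-(2 * u z))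

/-- The difference of the two sides of the Codazzi equation. -/
def codazziDefect (u H Q : ℂ → ℂ) (z : ℂ) : ℂ :=
  dzbC Q z - 2 * exp (2 * u z) * dzC H z

/-- The difference of the two sides of the conjugate Codazzi equation
`∂_z R = 2 e^{2u} ∂_z̄ H`. -/
def conjCodazziDefect (u H R : ℂ → ℂ) (z : ℂ) : ℂ :=
  dzC R z - 2 * exp (2 * u z) * dzbC H z

variable {u H Q R : ℂ → ℂ} {z : ℂ}

theorem dzb_laxU (hu : ContDiffAt ℝ 2 u z) (hH : DifferentiableAt ℝ H z)
    (hQ : DifferentiableAt ℝ Q z) :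
    dzb (laxU u H Q) z = (2 : ℂ)⁻¹ •
      !![dzbC (dzC u) z, -2 * (dzbC H z + H z * dzbC u z) * exp (u z);
        (dzbC Q z - Q z * dzbC u z) * exp (-u z), -dzbC (dzC u) z] := by
  have hu₁ : DifferentiableAt ℝ u z := hu.differentiableAt two_ne_zero
  have huz : DifferentiableAt ℝ (dzC u) z := by
    rw [dzC_eq_wirtingerDeriv]
    exact differentiableAt_wirtingerDeriv _ hu
  have h01 : DifferentiableAt ℝ (fun w => -2 * H w * exp (u w)) z := by fun_prop
  have h10 : DifferentiableAt ℝ (fun w => Q w * exp (-u w)) z := by fun_prop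
  have h2H : wirtingerDeriv I (fun w => -2 * H w) z = -2 * wirtingerDeriv I H z :=
    wirtingerDeriv_const_smul I (-2) hH
  rw [dzb_eq_wirtingerDeriv]
  unfold laxU
  rw [wirtingerDeriv_const_smul _ _ (differentiableAt_fin_two huz h01 h10 huz.fun_neg),
    wirtingerDeriv_fin_two _ huz h01 h10 huz.fun_neg,
    wirtingerDeriv_mul_cexp _ hu₁ (hH.const_mul _), wirtingerDeriv_mul_cexp _ hu₁.fun_neg hQ,
    wirtingerDeriv_neg, wirtingerDeriv_neg, h2H]
  simp only [dzbC_eq_wirtingerDeriv]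
  ring_nf

theorem dz_laxV (hu : ContDiffAt ℝ 2 u z) (hH : DifferentiableAt ℝ H z)
    (hR : DifferentiableAt ℝ R z) :
    dz (laxV u H R) z = (2 : ℂ)⁻¹ •
      !![-dzC (dzbC u) z, -(dzC R z - R z * dzC u z) * exp (-u z);
        2 * (dzC H z + H z * dzC u z) * exp (u z), dzC (dzbC u) z] := by
  have hu₁ : DifferentiableAt ℝ u z := hu.differentiableAt two_ne_zero
  have huzb : DifferentiableAt ℝ (dzbC u) z := differentiableAt_wirtingerDeriv I hu
  have h01 : DifferentiableAt ℝ (fun w => -R w * exp (-u w)) z := by fun_prop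
  have h10 : DifferentiableAt ℝ (fun w => 2 * H w * exp (u w)) z := by fun_prop
  have h2H : wirtingerDeriv (-I) (fun w => 2 * H w) z = 2 * wirtingerDeriv (-I) H z :=
    wirtingerDeriv_const_smul (-I) 2 hH
  rw [dz_eq_wirtingerDeriv]
  unfold laxV
  rw [wirtingerDeriv_const_smul _ _ (differentiableAt_fin_two huzb.fun_neg h01 h10 huzb),
    wirtingerDeriv_fin_two _ huzb.fun_neg h01 h10 huzb,
    wirtingerDeriv_mul_cexp _ hu₁.fun_neg hR.fun_neg,
    wirtingerDeriv_mul_cexp _ hu₁ (hH.const_mul _),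
    wirtingerDeriv_neg, wirtingerDeriv_neg, wirtingerDeriv_neg, h2H]
  simp only [dzC_eq_wirtingerDeriv]
  ring_nf

theorem dzC_dzbC_comm (hu : ContDiffAt ℝ 2 u z) : dzC (dzbC u) z = dzbC (dzC u) z := by
  simp only [dzC_eq_wirtingerDeriv, dzbC_eq_wirtingerDeriv]
  exact wirtingerDeriv_comm _ _ hu

theorem curvature_laxU_laxV (hu : ContDiffAt ℝ 2 u z) (hH : DifferentiableAt ℝ H z)
    (hQ : DifferentiableAt ℝ Q z) (hR : DifferentiableAt ℝ R z) :
    curvature (laxU u H Q) (laxV u H R) z =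
      !![-gaussDefect u H Q R z, -(2 : ℂ)⁻¹ * exp (-u z) * conjCodazziDefect u H R z;
        -(2 : ℂ)⁻¹ * exp (-u z) * codazziDefect u H Q z, gaussDefect u H Q R z] := by
  have hexp_two : exp (2 * u z) = exp (u z) ^ 2 := by rw [two_mul, exp_add, sq]
  have hexp_neg_two : exp (-(2 * u z)) = exp (-u z) ^ 2 := by
    rw [two_mul, neg_add, exp_add, sq]
  have hexp_cancel : exp (-u z) * exp (u z) = 1 := by rw [← exp_add, neg_add_cancel, exp_zero]
  rw [curvature, dz_laxV hu hH hR, dzb_laxU hu hH hQ, dzC_dzbC_comm hu, laxU, laxV]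
  simp only [gaussDefect, codazziDefect, conjCodazziDefect, hexp_two, hexp_neg_two]
  simp only [← Matrix.ext_iff, Fin.forall_fin_two, Matrix.add_apply, Matrix.sub_apply,
    Matrix.smul_apply, Matrix.mul_apply, Fin.sum_univ_two, of_apply, cons_val', cons_val_zero,
    cons_val_one, cons_val_fin_one, smul_eq_mul]
  refine ⟨⟨?_, ?_⟩, ?_, ?_⟩
  · ring
  · linear_combination -exp (u z) * dzbC H z * hexp_cancel
  · linear_combination -exp (u z) * dzC H z * hexp_cancel
  · ring

theorem curvature_laxU_laxV_eq_zero_iff (hu : ContDiffAt ℝ 2 u z) (hH : DifferentiableAt ℝ H z)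
    (hQ : DifferentiableAt ℝ Q z) (hR : DifferentiableAt ℝ R z) :
    curvature (laxU u H Q) (laxV u H R) z = 0 ↔
      gaussDefect u H Q R z = 0 ∧ codazziDefect u H Q z = 0 ∧ conjCodazziDefect u H R z = 0 := by
  simp only [curvature_laxU_laxV hu hH hQ hR, ← Matrix.ext_iff, Fin.forall_fin_two, of_apply,
    cons_val', cons_val_zero, cons_val_one, cons_val_fin_one, Matrix.zero_apply, neg_mul,
    neg_eq_zero, mul_eq_zero, inv_eq_zero, OfNat.ofNat_ne_zero, exp_ne_zero, false_or]
  tauto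

end LaxPair

section RealForm

theorem fderiv_ofReal_comp_apply (u : ℂ → ℝ) (z v : ℂ) :
    fderiv ℝ (fun w => (u w : ℂ)) z v = (fderiv ℝ u z v : ℂ) := by
  by_cases hu : DifferentiableAt ℝ u z
  · exact DFunLike.congr_fun (ofRealCLM.hasFDerivAt.comp z hu.hasFDerivAt).fderiv v
  · have hu' : ¬ DifferentiableAt ℝ (fun w => (u w : ℂ)) z := fun h =>
      hu (reCLM.differentiableAt.comp z h)
    simp [fderiv_zero_of_not_differentiableAt hu, fderiv_zero_of_not_differentiableAt hu']

theorem dzR_eq_dzC (u : ℂ → ℝ) : dzR u = dzC fun w => (u w : ℂ) := by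
  funext z
  simp only [dzR, pxR, pyR, dzC, pxC, pyC, fderiv_ofReal_comp_apply]

theorem dzbR_eq_dzbC (u : ℂ → ℝ) : dzbR u = dzbC fun w => (u w : ℂ) := by
  funext z
  simp only [dzbR, pxR, pyR, dzbC, pxC, pyC, fderiv_ofReal_comp_apply]

theorem conj_dzC (f : ℂ → ℂ) (z : ℂ) : conj (dzC f z) = dzbC (fun w => conj (f w)) z := by
  rw [dzC_eq_wirtingerDeriv, conj_wirtingerDeriv, map_neg, conj_I, neg_neg,
    dzbC_eq_wirtingerDeriv]

theorem conj_dzbC (f : ℂ → ℂ) (z : ℂ) : conj (dzbC f z) = dzC (fun w => conj (f w)) z := by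
  rw [dzbC_eq_wirtingerDeriv, conj_wirtingerDeriv, conj_I, dzC_eq_wirtingerDeriv]

theorem conj_codazziDefect (u H : ℂ → ℝ) (Q : ℂ → ℂ) (z : ℂ) :
    conj (codazziDefect (fun w => u w) (fun w => H w) Q z) =
      conjCodazziDefect (fun w => u w) (fun w => H w) (fun w => conj (Q w)) z := by
  simp [codazziDefect, conjCodazziDefect, conj_dzC, conj_dzbC, ← exp_conj, map_ofNat]

theorem conjCodazziDefect_conj_eq_zero_iff (u H : ℂ → ℝ) (Q : ℂ → ℂ) (z : ℂ) :
    conjCodazziDefect (fun w => u w) (fun w => H w) (fun w => conj (Q w)) z = 0 ↔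
      codazziDefect (fun w => u w) (fun w => H w) Q z = 0 := by
  rw [← conj_codazziDefect, map_eq_zero]

end RealForm

theorem zero_curvature_iff_gauss_codazzi_general
    {u H : ℂ → ℝ} {Q : ℂ → ℂ} {z : ℂ} (hu : ContDiffAt ℝ 2 u z)
    (hQ : DifferentiableAt ℝ Q z) (hH : DifferentiableAt ℝ H z) {U V : ℂ → M2}
    (hU : ∀ w, U w = (2 : ℂ)⁻¹ •
      !![dzR u w, -2 * (H w : ℂ) * (Real.exp (u w) : ℂ);
         Q w * (Real.exp (-(u w)) : ℂ), -(dzR u w)])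
    (hV : ∀ w, V w = (2 : ℂ)⁻¹ •
      !![-(dzbR u w), -(conj (Q w)) * (Real.exp (-(u w)) : ℂ);
         2 * (H w : ℂ) * (Real.exp (u w) : ℂ), dzbR u w]) :
    dz V z - dzb U z + (U z * V z - V z * U z) = 0 ↔
      dzbC (dzR u) z + (H z : ℂ) ^ 2 * (Real.exp (2 * u z) : ℂ)
        - (4 : ℂ)⁻¹ * ((‖Q z‖ ^ 2 : ℝ) : ℂ) * (Real.exp (-(2 * u z)) : ℂ) = 0 ∧
      dzbC Q z = 2 * (Real.exp (2 * u z) : ℂ) * dzR H z := by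
  have hU' : U = laxU (fun w => u w) (fun w => H w) Q := by
    funext w
    simp [hU, laxU, dzR_eq_dzC]
  have hV' : V = laxV (fun w => u w) (fun w => H w) (fun w => conj (Q w)) := by
    funext w
    simp [hV, laxV, dzbR_eq_dzbC]
  have hu' : ContDiffAt ℝ 2 (fun w => (u w : ℂ)) z := ofRealCLM.contDiff.contDiffAt.comp z hu
  have hH' : DifferentiableAt ℝ (fun w => (H w : ℂ)) z := ofRealCLM.differentiableAt.comp z hH
  have hQ' : DifferentiableAt ℝ (fun w => conj (Q w)) z := conjCLE.differentiableAt.comp z hQ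
  rw [← curvature, hU', hV', curvature_laxU_laxV_eq_zero_iff hu' hH' hQ hQ',
    conjCodazziDefect_conj_eq_zero_iff, and_self_iff]
  simp [gaussDefect, codazziDefect, sub_eq_zero, dzR_eq_dzC, mul_conj']

/-- the zero-curvature (Maurer–Cartan) equation for the matrices `U`, `V`
built from `u`, `Q`, `H` is equivalent to the Gauss and Codazzi equations. -/
theorem zero_curvature_iff_gauss_codazzi
    (S : Set ℂ) (hS : IsOpen S)
    (u : ℂ → ℝ) (Q : ℂ → ℂ) (H : ℂ → ℝ)
    (hu : ContDiffOn ℝ (⊤ : ℕ∞) u S)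
    (hQ : ContDiffOn ℝ (⊤ : ℕ∞) Q S)
    (hH : ContDiffOn ℝ (⊤ : ℕ∞) H S)
    (U V : ℂ → M2)
    (hU : ∀ z, U z = (2:ℂ)⁻¹ •
      !![dzR u z, -2 * (H z : ℂ) * (Real.exp (u z) : ℂ);
         Q z * (Real.exp (-(u z)) : ℂ), -(dzR u z)])
    (hV : ∀ z, V z = (2:ℂ)⁻¹ •
      !![-(dzbR u z), -((starRingEnd ℂ) (Q z)) * (Real.exp (-(u z)) : ℂ);
         2 * (H z : ℂ) * (Real.exp (u z) : ℂ), dzbR u z]) :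
    (∀ z ∈ S, dz V z - dzb U z + (U z * V z - V z * U z) = 0) ↔
    (∀ z ∈ S,
      dzbC (dzR u) z + (H z : ℂ) ^ 2 * (Real.exp (2 * u z) : ℂ)
        - (4:ℂ)⁻¹ * ((‖Q z‖ ^ 2 : ℝ) : ℂ) * (Real.exp (-(2 * u z)) : ℂ) = 0 ∧
      dzbC Q z = 2 * (Real.exp (2 * u z) : ℂ) * dzR H z) := by
  refine forall₂_congr fun z hz => ?_
  have hz' := hS.mem_nhds hz
  exact zero_curvature_iff_gauss_codazzi_general ((hu.contDiffAt hz').of_le (by norm_cast))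
    ((hQ.contDiffAt hz').differentiableAt (by simp))
    ((hH.contDiffAt hz').differentiableAt (by simp)) hU hV
end
end
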